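/- Let G = K_n be the complete graph on n > 4 vertices and let T_s be a star spanning tree of G. Then ∩(T_s) < ∩(T) for every spanning tree T of G that is not a star spanning tree; that is, star spanning trees are the unique minimizers of the tree intersection number. -/

import Mathlib

open SimpleGraph

/-- The set of edges lying on some path (in a tree: the unique path) between `x` and `y`
in the graph `T`. -/
def pathEdges {V : Type*} (T : SimpleGraph V) (x y : V) : Set (Sym2 V) :=
  {f | ∃ p : T.Walk x y, p.IsPath ∧ f ∈ p.edges}

/-- The edge set of the tree-cycle induced (in the spanning tree `T`) by the cycle-edge `e`:
the edge `e` itself together with the edges of the (unique) path in `T` between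
the endpoints of `e`. -/
def cycEdges {V : Type*} (T : SimpleGraph V) (e : Sym2 V) : Set (Sym2 V) :=
  insert e {f | ∃ x y, e = s(x, y) ∧ f ∈ pathEdges T x y}

/-- The vertex set of the tree-cycle induced (in the spanning tree `T`) by the
cycle-edge `e`. -/
def cycVerts {V : Type*} (T : SimpleGraph V) (e : Sym2 V) : Set V :=
  {v | ∃ x y, e = s(x, y) ∧ ∃ p : T.Walk x y, p.IsPath ∧ v ∈ p.support}

/-- Two tree-cycles (induced by the cycle-edges `e` and `f`) have non-empty intersection:
some edge of `T` belongs to both of them. -/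
def cyclesIntersect {V : Type*} (T : SimpleGraph V) (e f : Sym2 V) : Prop :=
  (cycEdges T e ∩ cycEdges T f ∩ T.edgeSet).Nonempty

/-- The cycle intersection number `∩_T(c)` of the tree-cycle `c` induced by the
cycle-edge `e`: the number of tree-cycles distinct from `c` whose intersection with `c`
is non-empty. -/
noncomputable def cycleInterNum {V : Type*} (G T : SimpleGraph V) (e : Sym2 V) : ℕ :=
  {f | f ∈ G.edgeSet \ T.edgeSet ∧ f ≠ e ∧ cyclesIntersect T e f}.ncard

/-- The tree intersection number `∩_G(T)`: the number of unordered pairs of distinct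
tree-cycles of `T` whose intersection is non-empty. -/
noncomputable def treeInterNum {V : Type*} (G T : SimpleGraph V) : ℕ :=
  {p : Sym2 (Sym2 V) | ∃ e f : Sym2 V, p = s(e, f) ∧ e ≠ f ∧
    e ∈ G.edgeSet \ T.edgeSet ∧ f ∈ G.edgeSet \ T.edgeSet ∧ cyclesIntersect T e f}.ncard

/-- `T` is a star spanning tree of `G` with center `v`. -/
def IsStarSpanningTree {V : Type*} (G T : SimpleGraph V) (v : V) : Prop :=
  T ≤ G ∧ T.IsTree ∧ ∀ u, u ≠ v → T.Adj v u

/-- `closest-point-set(w, c)`: the set of vertices outside the tree-cycle `c` (induced by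
the cycle-edge `e`) whose closest point on `c` (with respect to distance in `T`) is `w`. -/
def closestPointSet {V : Type*} (T : SimpleGraph V) (e : Sym2 V) (w : V) : Set V :=
  {v | v ∉ cycVerts T e ∧ ∀ u ∈ cycVerts T e, T.dist v w ≤ T.dist v u}

/-! By the handshake identity, `2 * ∩(T)` is the sum of the cycle intersection numbers of the
`(n - 1).choose 2` tree-cycles. Fix a tree-cycle whose path in `T` has length `k`. A tree-cycle
disjoint from it has the ends of its cycle-edge in one component of the forest obtained by deleting
that path, which has `n - 1 - k` edges; and a graph with `m` edges has at most `m.choose 2`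
connected non-adjacent pairs. Since `2 ≤ k`, every cycle intersection number is therefore at least
`(n - 1).choose 2 - 1 - (n - 3).choose 2 = 2 * (n - 3)`. In a star all of them attain this bound,
because any two vertices off the cycle induce a cycle disjoint from it. A tree that is not a star
has a path of length `3`, and for `4 < n` the bound with `k = 3` is strictly larger. -/

lemma choose_two_succ (n : ℕ) : (n + 1).choose 2 = n + n.choose 2 := by
  rw [Nat.choose_succ_succ', Nat.choose_one_right]

lemma choose_two_sub_one {n : ℕ} (hn : 3 ≤ n) :
    (n - 1).choose 2 = 2 * (n - 3) + (n - 3).choose 2 + 1 := by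
  obtain ⟨m, rfl⟩ := Nat.exists_eq_add_of_le' hn
  calc (m + 2).choose 2 = m + 1 + (m + m.choose 2) := by rw [choose_two_succ, choose_two_succ]
    _ = 2 * m + m.choose 2 + 1 := by ring

section ConnectedPairs

variable {V : Type*} {F : SimpleGraph V}

/-- A chosen vertex of the connected component of `v` in `F`. -/
noncomputable def componentRep (F : SimpleGraph V) (v : V) : V :=
  (F.connectedComponentMk v).out

lemma reachable_componentRep (v : V) : F.Reachable v (componentRep F v) :=
  ConnectedComponent.exact (Quot.out_eq (F.connectedComponentMk v)).symm

lemma componentRep_eq_of_reachable {u v : V} (h : F.Reachable u v) :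
    componentRep F u = componentRep F v :=
  congrArg Quot.out (ConnectedComponent.sound h)

lemma exists_adj_dist_lt {u v : V} (h : F.Reachable u v) (hne : u ≠ v) :
    ∃ w, F.Adj u w ∧ F.dist w v < F.dist u v := by
  obtain ⟨p, hp⟩ := h.exists_walk_length_eq_dist
  cases p with
  | nil => exact absurd rfl hne
  | @cons _ w _ huw q =>
    have hq : q.length + 1 = F.dist u v := hp
    have hle : F.dist w v ≤ q.length := dist_le q
    exact ⟨w, huw, by omega⟩

-- Send a vertex to the first edge of a geodesic to its representative.
lemma ncard_componentRep_ne_le [Finite V] :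
    {v | v ≠ componentRep F v}.ncard ≤ F.edgeSet.ncard := by
  have hstep (v : V) : ∃ w, v ≠ componentRep F v →
      F.Adj v w ∧ F.dist w (componentRep F v) < F.dist v (componentRep F v) := by
    by_cases hv : v = componentRep F v
    · exact ⟨v, fun h => absurd hv h⟩
    · obtain ⟨w, hw⟩ := exists_adj_dist_lt (reachable_componentRep v) hv
      exact ⟨w, fun _ => hw⟩
  choose next hnext using hstep
  refine Set.ncard_le_ncard_of_injOn (fun v => s(v, next v)) (fun v hv => (hnext v hv).1) ?_
  intro u hu v hv huv
  obtain ⟨hadj, hlt⟩ := hnext u hu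
  obtain ⟨-, hlt'⟩ := hnext v hv
  rcases Sym2.eq_iff.1 huv with ⟨h, -⟩ | ⟨h, h'⟩
  · exact h
  · rw [componentRep_eq_of_reachable hadj.reachable, h'] at hlt
    rw [← h] at hlt'
    exact absurd hlt hlt'.asymm

lemma ncard_sym2_sdiff_diagSet [Finite V] (s : Set V) :
    (s.sym2 \ Sym2.diagSet).ncard = s.ncard.choose 2 := by
  classical
  have := Fintype.ofFinite V
  rw [Set.ncard_eq_toFinset_card' s, ← Sym2.card_image_offDiag, ← Set.ncard_coe_finset]
  congr 1
  ext e
  induction e with | _ a b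
  aesop

/-- The graph joining any two distinct vertices that lie in the same component of `F`. -/
def reachabilityGraph (F : SimpleGraph V) : SimpleGraph V where
  Adj a b := a ≠ b ∧ F.Reachable a b
  symm := ⟨fun _ _ h => ⟨h.1.symm, h.2.symm⟩⟩
  loopless := ⟨fun _ h => h.1 rfl⟩

-- A connected pair either avoids the representatives or consists of a vertex and its own
-- representative.
lemma ncard_edgeSet_reachabilityGraph_le [Finite V] :
    (reachabilityGraph F).edgeSet.ncard ≤ (F.edgeSet.ncard + 1).choose 2 := by
  set S : Set V := {v | v ≠ componentRep F v}
  have hcover : (reachabilityGraph F).edgeSet ⊆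
      (S.sym2 \ Sym2.diagSet) ∪ (fun v => s(v, componentRep F v)) '' S := by
    intro e he
    induction e with | _ a b
    obtain ⟨hne, hreach⟩ : a ≠ b ∧ F.Reachable a b := he
    have hrep := componentRep_eq_of_reachable hreach
    by_cases ha : a = componentRep F a
    · have hab : componentRep F b = a := (ha.trans hrep).symm
      exact Or.inr ⟨b, by simp [S, hab, hne.symm], by simp [hab, Sym2.eq_swap]⟩
    · by_cases hb : b = componentRep F b
      · exact Or.inr ⟨a, ha, by simp [hrep, ← hb]⟩
      · exact Or.inl ⟨⟨ha, hb⟩, by simpa using hne⟩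
  calc (reachabilityGraph F).edgeSet.ncard
      ≤ S.ncard.choose 2 + S.ncard := by
        refine (Set.ncard_le_ncard hcover).trans ((Set.ncard_union_le _ _).trans ?_)
        exact add_le_add (ncard_sym2_sdiff_diagSet S).le (Set.ncard_image_le)
    _ = (S.ncard + 1).choose 2 := by rw [choose_two_succ, add_comm]
    _ ≤ (F.edgeSet.ncard + 1).choose 2 :=
        Nat.choose_le_choose 2 (Nat.succ_le_succ ncard_componentRep_ne_le)

lemma ncard_edgeSet_reachabilityGraph_sdiff_le [Finite V] :
    ((reachabilityGraph F).edgeSet \ F.edgeSet).ncard ≤ F.edgeSet.ncard.choose 2 := by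
  have hle : F ≤ reachabilityGraph F := fun _ _ h => ⟨h.ne, h.reachable⟩
  have hsplit := Set.ncard_sdiff_add_ncard_of_subset (edgeSet_mono hle)
  have hbound := ncard_edgeSet_reachabilityGraph_le (F := F)
  rw [choose_two_succ] at hbound
  omega

end ConnectedPairs

section TreeCycles

variable {V : Type*} {G T : SimpleGraph V} {x y : V}

lemma pathEdges_subset_edgeSet : pathEdges T x y ⊆ T.edgeSet :=
  fun _ ⟨p, _, hf⟩ => p.edges_subset_edgeSet hf

lemma pathEdges_comm : pathEdges T x y = pathEdges T y x := by
  have hsub (a b : V) : pathEdges T a b ⊆ pathEdges T b a :=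
    fun _ ⟨p, hp, hf⟩ => ⟨p.reverse, hp.reverse, by simpa using hf⟩
  exact (hsub x y).antisymm (hsub y x)

lemma pathEdges_eq_of_isPath (hT : T.IsAcyclic) {p : T.Walk x y} (hp : p.IsPath) :
    pathEdges T x y = {f | f ∈ p.edges} := by
  ext f
  refine ⟨fun ⟨q, hq, hf⟩ => ?_, fun hf => ⟨p, hp, hf⟩⟩
  have hqp : q = p :=
    congrArg Subtype.val ((hT.subsingleton_path x y).elim ⟨q, hq⟩ ⟨p, hp⟩)
  exact hqp ▸ hf

lemma ncard_pathEdges_of_isPath (hT : T.IsAcyclic) {p : T.Walk x y} (hp : p.IsPath) :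
    (pathEdges T x y).ncard = p.length := by
  classical
  rw [pathEdges_eq_of_isPath hT hp, ← List.coe_toFinset, Set.ncard_coe_finset,
    List.toFinset_card_of_nodup hp.isTrail.edges_nodup, Walk.length_edges]

lemma not_adj_of_isPath (hT : T.IsAcyclic) {p : T.Walk x y} (hp : p.IsPath)
    (hlen : 1 < p.length) : ¬ T.Adj x y := by
  intro h
  have hone := ncard_pathEdges_of_isPath hT (.of_adj h)
  rw [ncard_pathEdges_of_isPath hT hp, Walk.length_cons, Walk.length_nil] at hone
  omega

lemma cycEdges_inter_edgeSet : cycEdges T s(x, y) ∩ T.edgeSet = pathEdges T x y := by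
  ext f
  constructor
  · rintro ⟨rfl | ⟨a, b, hab, hf⟩, hfT⟩
    · exact ⟨Adj.toWalk hfT, .of_adj hfT, List.mem_singleton_self _⟩
    · rcases Sym2.eq_iff.1 hab with ⟨rfl, rfl⟩ | ⟨rfl, rfl⟩
      · exact hf
      · rwa [pathEdges_comm]
  · exact fun hf => ⟨Or.inr ⟨x, y, rfl, hf⟩, pathEdges_subset_edgeSet hf⟩

lemma cyclesIntersect_mk_iff {a b : V} :
    cyclesIntersect T s(x, y) s(a, b) ↔ (pathEdges T x y ∩ pathEdges T a b).Nonempty := by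
  rw [cyclesIntersect, Set.inter_inter_distrib_right, cycEdges_inter_edgeSet,
    cycEdges_inter_edgeSet]

lemma cyclesIntersect_self (hT : T.Connected) (hne : x ≠ y) :
    cyclesIntersect T s(x, y) s(x, y) := by
  obtain ⟨p, hp⟩ := (hT.preconnected x y).exists_isPath
  rw [cyclesIntersect_mk_iff, Set.inter_self]
  cases p with
  | nil => exact absurd rfl hne
  | @cons _ w _ h q => exact ⟨s(x, w), .cons h q, hp, by simp⟩

lemma reachable_deleteEdges_pathEdges (hT : T.Connected) {a b : V}
    (h : ¬ cyclesIntersect T s(x, y) s(a, b)) :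
    (T.deleteEdges (pathEdges T x y)).Reachable a b := by
  obtain ⟨p, hp⟩ := (hT.preconnected a b).exists_isPath
  rw [cyclesIntersect_mk_iff, Set.not_nonempty_iff_eq_empty, ← Set.disjoint_iff_inter_eq_empty]
    at h
  exact ⟨p.toDeleteEdges _ fun f hf hxy => h.notMem_of_mem_left hxy ⟨p, hp, hf⟩⟩

/-- The cycle-edges whose tree-cycle shares no edge of `T` with the tree-cycle of `e`. Bounding
their number from above bounds `cycleInterNum G T e` from below. -/
def disjointCycleEdges (G T : SimpleGraph V) (e : Sym2 V) : Set (Sym2 V) :=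
  {f ∈ G.edgeSet \ T.edgeSet | ¬ cyclesIntersect T e f}

-- Deleting the path of the tree-cycle leaves a forest with `|V| - 1 - p.length` edges, whose
-- components contain all tree-paths disjoint from it.
lemma ncard_disjointCycleEdges_le [Finite V] (hT : T.IsTree) {p : T.Walk x y} (hp : p.IsPath) :
    (disjointCycleEdges G T s(x, y)).ncard ≤ (Nat.card V - 1 - p.length).choose 2 := by
  set F := T.deleteEdges (pathEdges T x y)
  have hF : F.edgeSet.ncard = Nat.card V - 1 - p.length := by
    have hcard : T.edgeSet.ncard + 1 = Nat.card V := (isTree_iff_connected_and_card.1 hT).2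
    rw [edgeSet_deleteEdges, Set.ncard_sdiff pathEdges_subset_edgeSet,
      ncard_pathEdges_of_isPath hT.isAcyclic hp]
    omega
  have hsub : disjointCycleEdges G T s(x, y) ⊆ (reachabilityGraph F).edgeSet \ F.edgeSet := by
    rintro f ⟨⟨hfG, hfT⟩, hf⟩
    induction f with | _ a b
    exact ⟨⟨G.ne_of_adj hfG, reachable_deleteEdges_pathEdges hT.connected hf⟩,
      fun hfF => hfT (edgeSet_mono (deleteEdges_le _) hfF)⟩
  exact hF ▸ (Set.ncard_le_ncard hsub).trans ncard_edgeSet_reachabilityGraph_sdiff_le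

lemma cycleInterNum_add_ncard_disjointCycleEdges [Finite V] (hT : T.Connected) {e : Sym2 V}
    (he : e ∈ G.edgeSet \ T.edgeSet) :
    cycleInterNum G T e + (disjointCycleEdges G T e).ncard + 1 =
      (G.edgeSet \ T.edgeSet).ncard := by
  have hself : cyclesIntersect T e e := by
    induction e with | _ x y
    exact cyclesIntersect_self hT (G.ne_of_adj he.1)
  set I : Set (Sym2 V) := {f | f ∈ G.edgeSet \ T.edgeSet ∧ f ≠ e ∧ cyclesIntersect T e f} with hI
  have hdisj : Disjoint I (disjointCycleEdges G T e) :=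
    Set.disjoint_left.2 fun _ hf hf' => hf'.2 hf.2.2
  have he_notMem : e ∉ I ∪ disjointCycleEdges G T e := by
    rintro (h | h)
    exacts [h.2.1 rfl, h.2 hself]
  have hpartition : insert e (I ∪ disjointCycleEdges G T e) = G.edgeSet \ T.edgeSet := by
    ext f
    by_cases hfe : f = e
    · simp [hfe, he]
    · by_cases hf : cyclesIntersect T e f <;> simp [hI, disjointCycleEdges, hfe, hf]
  rw [← hpartition, Set.ncard_insert_of_notMem he_notMem, Set.ncard_union_eq hdisj]
  rfl

/-- The graph of distinct intersecting tree-cycles, each represented by its cycle-edge. Its vertex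
set is all of `Sym2 V`, with every non-cycle-edge isolated, so that its edge set is literally the
set counted by `treeInterNum G T`. -/
def cycleIntersectionGraph (G T : SimpleGraph V) : SimpleGraph (Sym2 V) where
  Adj e f := e ≠ f ∧ e ∈ G.edgeSet \ T.edgeSet ∧ f ∈ G.edgeSet \ T.edgeSet ∧ cyclesIntersect T e f
  symm := ⟨fun _ _ ⟨hne, he, hf, g, hg, hgT⟩ => ⟨hne.symm, hf, he, g, hg.symm, hgT⟩⟩
  loopless := ⟨fun _ h => h.1 rfl⟩

lemma edgeSet_cycleIntersectionGraph :
    (cycleIntersectionGraph G T).edgeSet = {p : Sym2 (Sym2 V) | ∃ e f : Sym2 V, p = s(e, f) ∧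
      e ≠ f ∧ e ∈ G.edgeSet \ T.edgeSet ∧ f ∈ G.edgeSet \ T.edgeSet ∧ cyclesIntersect T e f} := by
  ext p
  constructor
  · induction p with | _ e f
    exact fun h => ⟨e, f, rfl, h⟩
  · rintro ⟨e, f, rfl, h⟩
    exact h

lemma degree_cycleIntersectionGraph {e : Sym2 V}
    [Fintype ((cycleIntersectionGraph G T).neighborSet e)] (he : e ∈ G.edgeSet \ T.edgeSet) :
    (cycleIntersectionGraph G T).degree e = cycleInterNum G T e := by
  rw [← card_neighborFinset_eq_degree, ← Set.ncard_coe_finset, coe_neighborFinset, cycleInterNum]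
  congr 1
  ext f
  exact ⟨fun ⟨hne, _, hf, h⟩ => ⟨hf, hne.symm, h⟩, fun ⟨hf, hne, h⟩ => ⟨hne.symm, he, hf, h⟩⟩

lemma sum_cycleInterNum [Finite V] :
    ∑ e ∈ (G.edgeSet \ T.edgeSet).toFinite.toFinset, cycleInterNum G T e =
      2 * treeInterNum G T := by
  classical
  have := Fintype.ofFinite V
  calc ∑ e ∈ (G.edgeSet \ T.edgeSet).toFinite.toFinset, cycleInterNum G T e
      = ∑ e ∈ (G.edgeSet \ T.edgeSet).toFinite.toFinset, (cycleIntersectionGraph G T).degree e :=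
        Finset.sum_congr rfl fun e he =>
          (degree_cycleIntersectionGraph ((Set.Finite.mem_toFinset _).1 he)).symm
    _ = ∑ e, (cycleIntersectionGraph G T).degree e := by
        refine Finset.sum_subset (Finset.subset_univ _) fun e _ he => ?_
        rw [degree_eq_zero]
        exact fun f h => he ((Set.Finite.mem_toFinset _).2 h.2.1)
    _ = 2 * treeInterNum G T := by
        rw [sum_degrees_eq_twice_card_edges, treeInterNum, ← edgeSet_cycleIntersectionGraph,
          ← coe_edgeFinset, Set.ncard_coe_finset]

end TreeCycles

section CompleteGraph

variable {V : Type*} {T : SimpleGraph V}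

lemma ncard_edgeSet_top_sdiff [Finite V] (hT : T.IsTree) :
    ((⊤ : SimpleGraph V).edgeSet \ T.edgeSet).ncard = (Nat.card V - 1).choose 2 := by
  have htop : (⊤ : SimpleGraph V).edgeSet.ncard = (Nat.card V).choose 2 := by
    simpa [Set.compl_eq_univ_sdiff] using ncard_sym2_sdiff_diagSet (Set.univ : Set V)
  have hedges : T.edgeSet.ncard + 1 = Nat.card V := (isTree_iff_connected_and_card.1 hT).2
  rw [Set.ncard_sdiff (edgeSet_mono le_top), htop, ← hedges, choose_two_succ,
    Nat.add_sub_cancel_left, Nat.add_sub_cancel]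

lemma mk_mem_edgeSet_top_sdiff_of_isPath (hT : T.IsAcyclic) {x y : V} {p : T.Walk x y}
    (hp : p.IsPath) (hlen : 1 < p.length) :
    s(x, y) ∈ (⊤ : SimpleGraph V).edgeSet \ T.edgeSet := by
  have hne : x ≠ y := by
    rintro rfl
    exact (Nat.zero_lt_of_lt hlen).ne' (Walk.isPath_iff_nil.1 hp).length_eq_zero
  exact ⟨hne, not_adj_of_isPath hT hp hlen⟩

lemma choose_two_le_cycleInterNum_add [Finite V] {x y : V} (hT : T.IsTree) {p : T.Walk x y}
    (hp : p.IsPath) (hlen : 1 < p.length) :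
    (Nat.card V - 1).choose 2 ≤
      cycleInterNum ⊤ T s(x, y) + (Nat.card V - 1 - p.length).choose 2 + 1 := by
  have hcycle := mk_mem_edgeSet_top_sdiff_of_isPath hT.isAcyclic hp hlen
  have hdisj := ncard_disjointCycleEdges_le (G := ⊤) hT hp
  rw [← ncard_edgeSet_top_sdiff hT,
    ← cycleInterNum_add_ncard_disjointCycleEdges hT.connected hcycle]
  omega

lemma two_mul_card_sub_three_le_cycleInterNum [Finite V] (hT : T.IsTree) {e : Sym2 V}
    (he : e ∈ (⊤ : SimpleGraph V).edgeSet \ T.edgeSet) :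
    2 * (Nat.card V - 3) ≤ cycleInterNum ⊤ T e := by
  induction e with | _ x y
  rcases lt_or_ge (Nat.card V) 3 with hn | hn
  · omega
  obtain ⟨p, hp, hlen⟩ := hT.connected.exists_path_of_dist x y
  have htwo : 1 < p.length :=
    hlen ▸ hT.connected.one_lt_dist_of_ne_of_not_adj he.1 he.2
  have hbound := choose_two_le_cycleInterNum_add hT hp htwo
  have hmono : (Nat.card V - 1 - p.length).choose 2 ≤ (Nat.card V - 3).choose 2 :=
    Nat.choose_le_choose 2 (by omega)
  rw [choose_two_sub_one hn] at hbound
  omega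

lemma two_mul_card_sub_three_lt_cycleInterNum [Finite V] (hn : 4 < Nat.card V) (hT : T.IsTree)
    {x y : V} {p : T.Walk x y} (hp : p.IsPath) (hlen : 2 < p.length) :
    2 * (Nat.card V - 3) < cycleInterNum ⊤ T s(x, y) := by
  have hbound := choose_two_le_cycleInterNum_add hT hp (by omega)
  have hlt : (Nat.card V - 1 - p.length).choose 2 < (Nat.card V - 3).choose 2 := by
    calc (Nat.card V - 1 - p.length).choose 2
        ≤ (Nat.card V - 4).choose 2 := Nat.choose_le_choose 2 (by omega)
      _ < (Nat.card V - 4) + (Nat.card V - 4).choose 2 := by omega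
      _ = (Nat.card V - 3).choose 2 := by
        rw [show Nat.card V - 3 = Nat.card V - 4 + 1 by omega, choose_two_succ]
  rw [choose_two_sub_one (by omega)] at hbound
  omega

end CompleteGraph

section Star

variable {V : Type*} {G T : SimpleGraph V} {v x y : V}

lemma IsStarSpanningTree.exists_isPath_edges_eq (h : IsStarSpanningTree G T v)
    (hxy : x ≠ y) (hx : x ≠ v) (hy : y ≠ v) :
    ∃ p : T.Walk x y, p.IsPath ∧ p.edges = [s(x, v), s(v, y)] :=
  ⟨.cons (h.2.2 x hx).symm (.cons (h.2.2 y hy) .nil), by simp [hxy, hx, hy.symm], rfl⟩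

lemma IsStarSpanningTree.pathEdges_eq (h : IsStarSpanningTree G T v)
    (hxy : x ≠ y) (hx : x ≠ v) (hy : y ≠ v) : pathEdges T x y = {s(x, v), s(v, y)} := by
  obtain ⟨p, hp, hedges⟩ := h.exists_isPath_edges_eq hxy hx hy
  ext f
  simp [pathEdges_eq_of_isPath h.2.1.isAcyclic hp, hedges]

lemma IsStarSpanningTree.not_adj (h : IsStarSpanningTree G T v)
    (hxy : x ≠ y) (hx : x ≠ v) (hy : y ≠ v) : ¬ T.Adj x y := by
  obtain ⟨p, hp, hedges⟩ := h.exists_isPath_edges_eq hxy hx hy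
  exact not_adj_of_isPath h.2.1.isAcyclic hp (by simp [← Walk.length_edges, hedges])

lemma IsStarSpanningTree.not_cyclesIntersect (h : IsStarSpanningTree G T v) {a b : V}
    (hxy : x ≠ y) (hx : x ≠ v) (hy : y ≠ v) (hab : a ≠ b) (ha : a ∉ ({v, x, y} : Set V))
    (hb : b ∉ ({v, x, y} : Set V)) : ¬ cyclesIntersect T s(x, y) s(a, b) := by
  simp only [Set.mem_insert_iff, Set.mem_singleton_iff, not_or] at ha hb
  rw [cyclesIntersect_mk_iff, h.pathEdges_eq hxy hx hy, h.pathEdges_eq hab ha.1 hb.1]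
  rintro ⟨f, hf, hf'⟩
  simp only [Set.mem_insert_iff, Set.mem_singleton_iff] at hf hf'
  grind

lemma IsStarSpanningTree.choose_two_le_ncard_disjointCycleEdges [Finite V]
    (h : IsStarSpanningTree ⊤ T v) (hxy : x ≠ y) (hx : x ≠ v) (hy : y ≠ v) :
    (Nat.card V - 3).choose 2 ≤ (disjointCycleEdges ⊤ T s(x, y)).ncard := by
  have hcard : ({v, x, y} : Set V)ᶜ.ncard = Nat.card V - 3 := by
    rw [Set.ncard_compl, Set.ncard_eq_three.2 ⟨v, x, y, hx.symm, hy.symm, hxy, rfl⟩]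
  rw [← hcard, ← ncard_sym2_sdiff_diagSet]
  refine Set.ncard_le_ncard ?_
  rintro f ⟨hf, hdiag⟩
  induction f with | _ a b
  obtain ⟨ha, hb⟩ : a ∉ ({v, x, y} : Set V) ∧ b ∉ ({v, x, y} : Set V) := hf
  have hab : a ≠ b := by simpa using hdiag
  exact ⟨⟨hab, h.not_adj hab (by grind) (by grind)⟩, h.not_cyclesIntersect hxy hx hy hab ha hb⟩

lemma IsStarSpanningTree.cycleInterNum_eq [Finite V] (h : IsStarSpanningTree ⊤ T v)
    {e : Sym2 V} (he : e ∈ (⊤ : SimpleGraph V).edgeSet \ T.edgeSet) :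
    cycleInterNum ⊤ T e = 2 * (Nat.card V - 3) := by
  refine le_antisymm ?_ (two_mul_card_sub_three_le_cycleInterNum h.2.1 he)
  have hsum := cycleInterNum_add_ncard_disjointCycleEdges h.2.1.connected he
  induction e with | _ x y
  obtain ⟨hxy, hnadj⟩ : x ≠ y ∧ ¬ T.Adj x y := he
  have hx : x ≠ v := by
    rintro rfl
    exact hnadj (h.2.2 y hxy.symm)
  have hy : y ≠ v := by
    rintro rfl
    exact hnadj (h.2.2 x hxy).symm
  have hn : 3 ≤ Nat.card V := by
    rw [← Set.ncard_eq_three.2 ⟨x, y, v, hxy, hx, hy, rfl⟩]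
    exact Set.ncard_le_card _
  have hdisj := h.choose_two_le_ncard_disjointCycleEdges hxy hx hy
  rw [ncard_edgeSet_top_sdiff h.2.1, choose_two_sub_one hn] at hsum
  omega

theorem IsStarSpanningTree.treeInterNum_eq [Finite V] (h : IsStarSpanningTree ⊤ T v) :
    treeInterNum ⊤ T = (Nat.card V - 1).choose 2 * (Nat.card V - 3) := by
  have hsum := sum_cycleInterNum (G := ⊤) (T := T)
  rw [Finset.sum_const_nat fun e he => h.cycleInterNum_eq ((Set.Finite.mem_toFinset _).1 he),
    ← Set.ncard_eq_toFinset_card, ncard_edgeSet_top_sdiff h.2.1] at hsum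
  linarith

end Star

section NonStar

variable {V : Type*} {T : SimpleGraph V}

lemma exists_adj_adj_not_adj (hT : T.Connected) {v : V} (h : ¬ ∀ u, u ≠ v → T.Adj v u) :
    ∃ a b, T.Adj v a ∧ T.Adj a b ∧ v ≠ b ∧ ¬ T.Adj v b := by
  push Not at h
  obtain ⟨u, huv, hadj⟩ := h
  obtain ⟨p⟩ := hT.preconnected v u
  obtain ⟨d, -, hfst, hsnd⟩ :=
    p.exists_boundary_dart (insert v (T.neighborSet v)) (by simp) (by simp [huv, hadj])
  simp only [Set.mem_insert_iff, mem_neighborSet, not_or] at hfst hsnd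
  refine ⟨d.fst, d.snd, hfst.resolve_left ?_, d.adj, Ne.symm hsnd.1, hsnd.2⟩
  intro hv
  exact hsnd.2 (hv ▸ d.adj)

lemma exists_isPath_length_eq_three (hT : T.Connected)
    (hns : ¬ ∃ v : V, ∀ u, u ≠ v → T.Adj v u) :
    ∃ (x y : V) (p : T.Walk x y), p.IsPath ∧ p.length = 3 := by
  rw [not_exists] at hns
  obtain ⟨x⟩ := hT.nonempty
  obtain ⟨w, y, hxw, hwy, hxy, -⟩ := exists_adj_adj_not_adj hT (hns x)
  obtain ⟨a, b, hwa, hab, hwb, hnwb⟩ := exists_adj_adj_not_adj hT (hns w)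
  have hpath {c : V} (hcw : T.Adj c w) (hca : c ≠ a) :
      ∃ p : T.Walk c b, p.IsPath ∧ p.length = 3 := by
    have hcb : c ≠ b := by
      rintro rfl
      exact hnwb hcw.symm
    exact ⟨.cons hcw (.cons hwa (.cons hab .nil)),
      by simp [hcw.ne, hca, hcb, hwa.ne, hwb, hab.ne], rfl⟩
  by_cases hxa : x = a
  · exact ⟨y, b, hpath hwy.symm (hxa ▸ hxy.symm)⟩
  · exact ⟨x, b, hpath hxw hxa⟩

theorem lt_treeInterNum_of_not_star [Finite V] (hn : 4 < Nat.card V) (hT : T.IsTree)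
    (hns : ¬ ∃ v : V, ∀ u, u ≠ v → T.Adj v u) :
    (Nat.card V - 1).choose 2 * (Nat.card V - 3) < treeInterNum ⊤ T := by
  obtain ⟨x, y, p, hp, hlen⟩ := exists_isPath_length_eq_three hT.connected hns
  have hxy := mk_mem_edgeSet_top_sdiff_of_isPath hT.isAcyclic hp (by omega)
  set C : Set (Sym2 V) := (⊤ : SimpleGraph V).edgeSet \ T.edgeSet with hC
  have hlt : ∑ e ∈ C.toFinite.toFinset, 2 * (Nat.card V - 3) <
      ∑ e ∈ C.toFinite.toFinset, cycleInterNum ⊤ T e :=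
    Finset.sum_lt_sum
      (fun e he => two_mul_card_sub_three_le_cycleInterNum hT ((Set.Finite.mem_toFinset _).1 he))
      ⟨s(x, y), (Set.Finite.mem_toFinset _).2 hxy,
        two_mul_card_sub_three_lt_cycleInterNum hn hT hp (by omega)⟩
  rw [sum_cycleInterNum, Finset.sum_const, smul_eq_mul, ← Set.ncard_eq_toFinset_card, hC,
    ncard_edgeSet_top_sdiff hT] at hlt
  linarith

end NonStar

/-- In the complete graph `K_n` with `n > 4`, a star spanning tree `T_s`
satisfies `∩(T_s) < ∩(T)` for every non-star spanning tree `T`; star spanning trees are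
the unique minimizers of the tree intersection number. -/
theorem stmt_9 {V : Type*} [Fintype V] (hn : 4 < Fintype.card V)
    (Ts T : SimpleGraph V) (v : V)
    (hTs : IsStarSpanningTree (⊤ : SimpleGraph V) Ts v)
    (hle : T ≤ (⊤ : SimpleGraph V)) (hT : T.IsTree)
    (hns : ¬ ∃ w : V, ∀ u, u ≠ w → T.Adj w u) :
    treeInterNum (⊤ : SimpleGraph V) Ts < treeInterNum (⊤ : SimpleGraph V) T := by
  have hcard : 4 < Nat.card V := by rwa [Nat.card_eq_fintype_card]
  rw [hTs.treeInterNum_eq]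
  exact lt_treeInterNum_of_not_star hcard hT hns
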